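/- Let φ : ℝ² → ℝ be continuous, positively 1-homogeneous, positive on nonzero vectors, and assume the sublevel set {x ∈ ℝ² : φ(x) ≤ 1} is strictly convex. Then for every point x in the topological frontier ∂W_φ of the Wulff shape there exists a unique unit vector ν ∈ S¹ such that ⟪x, ν⟫ = φ(ν); equivalently, the functional y ↦ ⟪x, y⟫ − φ(y) attains its maximum over S¹ (which equals 0) at a unique point. -/

import Mathlib

open scoped RealInnerProductSpace

/-- The Wulff shape of an anisotropic density `φ` on `ℝ²`:
`W_φ = {x : ⟪x, y⟫ ≤ φ(y) for all unit vectors y}`. -/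
def WulffShape (φ : EuclideanSpace ℝ (Fin 2) → ℝ) : Set (EuclideanSpace ℝ (Fin 2)) :=
  {x | ∀ y : EuclideanSpace ℝ (Fin 2), ‖y‖ = 1 → ⟪x, y⟫ ≤ φ y}

/-!
Existence is compactness of the unit sphere: if `⟪x, y⟫ < φ y` for every unit vector `y`, these
inequalities persist near `x`, which is then interior to the Wulff shape. For uniqueness, a contact
direction `ν` of `x` rescales to a point `(φ ν)⁻¹ • ν` of `{φ ≤ 1}` at which the functional `⟪x, ·⟫`
attains its maximum `1` over that set; strict convexity leaves room for only one such point, and it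
determines `ν`. Continuity of `φ` comes for free, because `φ` is the gauge of the convex
neighbourhood `{φ ≤ 1}` of the origin.
-/

theorem eq_of_isMaxOn_of_strictConvex {E : Type*} [AddCommGroup E] [Module ℝ E]
    [TopologicalSpace E] [ContinuousAdd E] [ContinuousSMul ℝ E] {s : Set E}
    (hs : StrictConvex ℝ s) {f : StrongDual ℝ E} (hf : f ≠ 0) {p q : E} (hp : p ∈ s) (hq : q ∈ s)
    (hpmax : IsMaxOn f s p) (hqmax : IsMaxOn f s q) : p = q := by
  by_contra hpq
  have hmid : s ∈ nhds (midpoint ℝ p q) :=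
    mem_interior_iff_mem_nhds.1 (hs.openSegment_subset hp hq hpq (midpoint_mem_openSegment p q))
  have hfpq : f q = f p := le_antisymm (hpmax hq) (hqmax hp)
  have hfmid : f (midpoint ℝ p q) = f p := by
    rw [midpoint_eq_smul_add, map_smul, map_add, hfpq, ← midpoint_eq_smul_add, midpoint_self]
  have himage : f '' s ∈ nhds (f p) :=
    hfmid ▸ (f.isOpenMap_of_ne_zero hf).image_mem_nhds hmid
  have hIic : Set.Iic (f p) ∈ nhds (f p) :=
    Filter.mem_of_superset himage (Set.image_subset_iff.2 hpmax)
  have hinterior := mem_interior_iff_mem_nhds.2 hIic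
  rw [interior_Iic] at hinterior
  exact lt_irrefl (f p) hinterior

/-- Positive 1-homogeneity, the defining property of an anisotropic density. The factor is
restricted to `0 < c`, so that `φ` need not be even. -/
def IsPosHomogeneous {E : Type*} [SMul ℝ E] (φ : E → ℝ) : Prop :=
  ∀ c : ℝ, 0 < c → ∀ x : E, φ (c • x) = c * φ x

namespace IsPosHomogeneous

variable {E : Type*} [AddCommGroup E] [Module ℝ E] {φ : E → ℝ}

theorem map_zero (hhom : IsPosHomogeneous φ) : φ 0 = 0 := by
  have h := hhom 2 two_pos 0
  rw [smul_zero] at h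
  linarith

theorem map_inv_smul_self (hhom : IsPosHomogeneous φ) {x : E} (hx : 0 < φ x) :
    φ ((φ x)⁻¹ • x) = 1 := by
  rw [hhom _ (inv_pos.2 hx), inv_mul_cancel₀ hx.ne']

theorem gauge_sublevel (hhom : IsPosHomogeneous φ) (hnonneg : ∀ x, 0 ≤ φ x) :
    gauge {x | φ x ≤ 1} = φ := by
  ext x
  have hscale : {r ∈ Set.Ioi (0 : ℝ) | r⁻¹ • x ∈ {x | φ x ≤ 1}} = Set.Ioi 0 ∩ Set.Ici (φ x) := by
    ext r
    refine and_congr_right fun hr : 0 < r ↦ ?_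
    rw [Set.mem_ofPred_eq, hhom _ (inv_pos.2 hr), inv_mul_le_one₀ hr, Set.mem_Ici]
  rw [gauge_def', hscale]
  rcases (hnonneg x).eq_or_lt with hx | hx
  · rw [← hx, Set.inter_eq_left.2 Set.Ioi_subset_Ici_self, csInf_Ioi]
  · rw [Set.inter_eq_right.2 (Set.Ici_subset_Ioi.2 hx), csInf_Ici]

theorem sublevel_mem_nhds_zero [TopologicalSpace E] (hhom : IsPosHomogeneous φ)
    (hpos : ∀ x, x ≠ 0 → 0 < φ x) (hstrict : StrictConvex ℝ {x | φ x ≤ 1}) :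
    {x | φ x ≤ 1} ∈ nhds 0 := by
  rcases subsingleton_or_nontrivial E with _ | _
  · refine Filter.mem_of_superset Filter.univ_mem fun x _ ↦ ?_
    rw [Subsingleton.elim x 0, Set.mem_ofPred_eq, hhom.map_zero]
    exact zero_le_one
  obtain ⟨x, hx⟩ := exists_ne (0 : E)
  set M := max (φ x) (φ (-x))
  have hM : 0 < M := lt_max_of_lt_left (hpos x hx)
  have hright : φ (M⁻¹ • x) ≤ 1 := by
    rw [hhom _ (inv_pos.2 hM), inv_mul_le_one₀ hM]
    exact le_max_left _ _
  have hleft : φ (-(M⁻¹ • x)) ≤ 1 := by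
    rw [← smul_neg, hhom _ (inv_pos.2 hM), inv_mul_le_one₀ hM]
    exact le_max_right _ _
  have : IsAddTorsionFree E := .of_isTorsionFree ℝ E
  have hne : M⁻¹ • x ≠ -(M⁻¹ • x) := self_ne_neg.2 (smul_ne_zero (inv_ne_zero hM.ne') hx)
  have hzero : (0 : E) ∈ openSegment ℝ (M⁻¹ • x) (-(M⁻¹ • x)) :=
    midpoint_self_neg (R := ℝ) (M⁻¹ • x) ▸ midpoint_mem_openSegment _ _
  exact mem_interior_iff_mem_nhds.1 (hstrict.openSegment_subset hright hleft hne hzero)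

theorem continuous_of_strictConvex_sublevel [TopologicalSpace E] [IsTopologicalAddGroup E]
    [ContinuousSMul ℝ E] (hhom : IsPosHomogeneous φ) (hpos : ∀ x, x ≠ 0 → 0 < φ x)
    (hstrict : StrictConvex ℝ {x | φ x ≤ 1}) : Continuous φ := by
  have hnonneg (x : E) : 0 ≤ φ x := by
    rcases eq_or_ne x 0 with rfl | hx
    · exact hhom.map_zero.ge
    · exact (hpos x hx).le
  rw [← hhom.gauge_sublevel hnonneg]
  exact continuous_gauge hstrict.convex (hhom.sublevel_mem_nhds_zero hpos hstrict)

end IsPosHomogeneous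

section WulffSet

variable {E : Type*} [NormedAddCommGroup E] [InnerProductSpace ℝ E] {φ : E → ℝ} {x : E}

/-- The Wulff shape of a density on an arbitrary real inner product space; on `ℝ²` it is
`WulffShape φ` by definition. -/
def wulffSet (φ : E → ℝ) : Set E :=
  {x | ∀ y : E, ‖y‖ = 1 → ⟪x, y⟫ ≤ φ y}

theorem isClosed_wulffSet (φ : E → ℝ) : IsClosed (wulffSet φ) := by
  simp only [wulffSet, Set.ofPred_forall]
  exact isClosed_iInter fun y ↦ isClosed_iInter fun _ ↦ isClosed_le (by fun_prop) continuous_const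

theorem mem_interior_wulffSet [FiniteDimensional ℝ E] (hφ : LowerSemicontinuous φ)
    (hx : ∀ y, ‖y‖ = 1 → ⟪x, y⟫ < φ y) : x ∈ interior (wulffSet φ) := by
  have hgap : LowerSemicontinuous fun z : E × E ↦ φ z.2 + -⟪z.1, z.2⟫ :=
    (hφ.comp continuous_snd).add (by fun_prop : Continuous _).lowerSemicontinuous
  have hev : ∀ᶠ z in nhds x, ∀ y ∈ Metric.sphere (0 : E) 1, 0 < φ y + -⟪z, y⟫ :=
    (isCompact_sphere 0 1).eventually_forall_of_forall_eventually fun y hy ↦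
      hgap (x, y) 0 (by linarith [hx y (mem_sphere_zero_iff_norm.1 hy)])
  rw [mem_interior_iff_mem_nhds]
  filter_upwards [hev] with z hz y hy
  linarith [hz y (mem_sphere_zero_iff_norm.2 hy)]

theorem exists_inner_eq_of_mem_frontier_wulffSet [FiniteDimensional ℝ E]
    (hφ : LowerSemicontinuous φ) (hx : x ∈ frontier (wulffSet φ)) :
    ∃ ν, ‖ν‖ = 1 ∧ ⟪x, ν⟫ = φ ν := by
  rw [(isClosed_wulffSet φ).frontier_eq] at hx
  by_contra! hne
  exact hx.2 (mem_interior_wulffSet hφ fun y hy ↦ (hx.1 y hy).lt_of_ne (hne y hy))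

theorem inner_le_of_mem_wulffSet (hhom : IsPosHomogeneous φ) (hx : x ∈ wulffSet φ) (y : E) :
    ⟪x, y⟫ ≤ φ y := by
  rcases eq_or_ne y 0 with rfl | hy
  · rw [inner_zero_right, hhom.map_zero]
  have hnorm : 0 < ‖y‖⁻¹ := inv_pos.2 (norm_pos_iff.2 hy)
  have hunit := hx (‖y‖⁻¹ • y) (norm_smul_inv_norm hy)
  rw [hhom _ hnorm, inner_smul_right] at hunit
  exact le_of_mul_le_mul_left hunit hnorm

theorem isMaxOn_inner_sublevel (hhom : IsPosHomogeneous φ) (hx : x ∈ wulffSet φ) {ν : E}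
    (hν : 0 < φ ν) (hcontact : ⟪x, ν⟫ = φ ν) :
    IsMaxOn (innerSL ℝ x) {y | φ y ≤ 1} ((φ ν)⁻¹ • ν) := by
  intro y hy
  calc ⟪x, y⟫ ≤ φ y := inner_le_of_mem_wulffSet hhom hx y
    _ ≤ 1 := hy
    _ = ⟪x, (φ ν)⁻¹ • ν⟫ := by rw [inner_smul_right, hcontact, inv_mul_cancel₀ hν.ne']

theorem eq_of_inner_eq_of_mem_wulffSet (hhom : IsPosHomogeneous φ)
    (hstrict : StrictConvex ℝ {y | φ y ≤ 1}) (hx : x ∈ wulffSet φ) {μ ν : E} (hnorm : ‖μ‖ = ‖ν‖)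
    (hμ : 0 < φ μ) (hν : 0 < φ ν) (hμx : ⟪x, μ⟫ = φ μ) (hνx : ⟪x, ν⟫ = φ ν) : μ = ν := by
  have hx0 : innerSL ℝ x ≠ 0 := fun h ↦
    hμ.ne' (hμx.symm.trans (DFunLike.congr_fun h μ))
  have hrescaled : (φ μ)⁻¹ • μ = (φ ν)⁻¹ • ν :=
    eq_of_isMaxOn_of_strictConvex hstrict hx0 (hhom.map_inv_smul_self hμ).le
      (hhom.map_inv_smul_self hν).le (isMaxOn_inner_sublevel hhom hx hμ hμx)
      (isMaxOn_inner_sublevel hhom hx hν hνx)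
  have hray : SameRay ℝ μ ν :=
    .inr (.inr ⟨_, _, inv_pos.2 hμ, inv_pos.2 hν, hrescaled⟩)
  exact hray.eq_of_norm_eq hnorm

theorem frontier_wulffShape_unique_contact_direction_general [FiniteDimensional ℝ E]
    (hhom : IsPosHomogeneous φ) (hpos : ∀ y, y ≠ 0 → 0 < φ y)
    (hstrict : StrictConvex ℝ {y | φ y ≤ 1}) (hx : x ∈ frontier (wulffSet φ)) :
    ∃! ν, ‖ν‖ = 1 ∧ ⟪x, ν⟫ = φ ν := by
  have hcont : Continuous φ := hhom.continuous_of_strictConvex_sublevel hpos hstrict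
  have hxW : x ∈ wulffSet φ := (isClosed_wulffSet φ).frontier_subset hx
  have hpos_unit {y : E} (hy : ‖y‖ = 1) : 0 < φ y := hpos y (norm_ne_zero_iff.1 (by simp [hy]))
  obtain ⟨ν, hν, hνx⟩ := exists_inner_eq_of_mem_frontier_wulffSet hcont.lowerSemicontinuous hx
  refine ⟨ν, ⟨hν, hνx⟩, fun μ ⟨hμ, hμx⟩ ↦ ?_⟩
  exact eq_of_inner_eq_of_mem_wulffSet hhom hstrict hxW (hμ.trans hν.symm) (hpos_unit hμ)
    (hpos_unit hν) hμx hνx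

end WulffSet

/-- If `φ : ℝ² → ℝ` is continuous, positively 1-homogeneous, positive on nonzero vectors,
and its unit sublevel set `{φ ≤ 1}` is strictly convex, then every point of the frontier
of the Wulff shape saturates exactly one defining inequality: there is a unique unit
vector `ν` with `⟪x, ν⟫ = φ(ν)`. -/
theorem frontier_wulffShape_unique_contact_direction
    (φ : EuclideanSpace ℝ (Fin 2) → ℝ)
    (hcont : Continuous φ)
    (hhom : ∀ c : ℝ, 0 < c → ∀ x : EuclideanSpace ℝ (Fin 2), φ (c • x) = c * φ x)
    (hpos : ∀ x : EuclideanSpace ℝ (Fin 2), x ≠ 0 → 0 < φ x)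
    (hstrict : StrictConvex ℝ {x : EuclideanSpace ℝ (Fin 2) | φ x ≤ 1}) :
    ∀ x ∈ frontier (WulffShape φ),
      ∃! ν : EuclideanSpace ℝ (Fin 2), ‖ν‖ = 1 ∧ ⟪x, ν⟫ = φ ν :=
  fun _ hx ↦ frontier_wulffShape_unique_contact_direction_general hhom hpos hstrict hx
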